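/- There is no infinite binary word containing at most 8 distinct palindromic factors (counting the empty word); in fact, every binary word of length at least 9 contains at least 9 distinct palindromic factors. -/

import Mathlib

def IsFactor {α : Type*} (y x : List α) : Prop := ∃ u v, x = u ++ y ++ v

def IsPal {α : Type*} (y : List α) : Prop := y.reverse = y

def PalFac {α : Type*} (x : List α) : Set (List α) := {y | IsFactor y x ∧ IsPal y}

/-- `u` is a (finite) factor of the infinite word `x`. -/
def InfFactor {α : Type*} (u : List α) (x : ℕ → α) : Prop :=
  ∃ i, u = (List.range u.length).map (fun j => x (i + j))

/-- All palindromic factors of `w`, listed without repetition. -/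
def palList (w : List (Fin 2)) : List (List (Fin 2)) :=
  ((w.tails.flatMap List.inits).filter (fun y => decide (y.reverse = y))).dedup

theorem palList_card : ∀ a b c d e f g h i : Fin 2,
    9 ≤ (palList [a, b, c, d, e, f, g, h, i]).length := by
  decide +kernel

theorem mem_palList {w y : List (Fin 2)} (h : y ∈ palList w) : y ∈ PalFac w := by
  simp only [palList, List.mem_dedup, List.mem_filter, List.mem_flatMap, List.mem_tails,
    List.mem_inits, decide_eq_true_eq] at h
  obtain ⟨⟨t, ⟨u, rfl⟩, ⟨v, rfl⟩⟩, hp⟩ := h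
  exact ⟨⟨u, v, by simp⟩, hp⟩

/-- Every binary word of length 9 has nine distinct palindromic factors. -/
theorem exists_nine (w : List (Fin 2)) (hw : w.length = 9) :
    ∃ T : Finset (List (Fin 2)), 9 ≤ T.card ∧ ∀ y ∈ T, y ∈ PalFac w := by
  refine ⟨(palList w).toFinset, ?_, fun y hy => mem_palList (List.mem_toFinset.1 hy)⟩
  rw [List.toFinset_card_of_nodup (show (palList w).Nodup from List.nodup_dedup _)]
  match w, hw with
  | [a, b, c, d, e, f, g, h, i], _ => exact palList_card a b c d e f g h i

theorem palFac_finite (w : List (Fin 2)) : (PalFac w).Finite := by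
  refine (List.finite_toSet (w.tails.flatMap List.inits)).subset ?_
  rintro y ⟨⟨u, v, rfl⟩, -⟩
  simp only [Set.mem_setOf_eq, List.mem_flatMap, List.mem_tails, List.mem_inits]
  exact ⟨y ++ v, ⟨u, by simp⟩, ⟨v, rfl⟩⟩

/-- There is no infinite binary word with at most 8 distinct palindromic factors
(counting the empty word); in fact every binary word of length at least 9 has at
least 9 distinct palindromic factors. -/
theorem no_infinite_binary_with_at_most_eight_palindromes :
    (∀ x : ℕ → Fin 2, ¬ ∃ S : Finset (List (Fin 2)), S.card ≤ 8 ∧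
      ∀ u, InfFactor u x → IsPal u → u ∈ S) ∧
    (∀ w : List (Fin 2), 9 ≤ w.length → 9 ≤ (PalFac w).ncard) := by
  constructor
  · rintro x ⟨S, hS, h⟩
    obtain ⟨T, hT, hTw⟩ := exists_nine ((List.range 9).map x) (by simp)
    have hsub : T ⊆ S := by
      intro y hy
      obtain ⟨⟨u, v, huv⟩, hp⟩ := hTw y hy
      refine h y ⟨u.length, ?_⟩ hp
      have hlen := congrArg List.length huv
      simp only [List.length_map, List.length_range, List.length_append] at hlen
      apply List.ext_getElem (by simp)
      intro j h1 h2
      have key : ((List.range 9).map x)[u.length + j]? = (u ++ y ++ v)[u.length + j]? := by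
        rw [huv]
      rw [List.append_assoc, List.getElem?_append_right (by omega),
        List.getElem?_append_left (by omega)] at key
      have h9 : u.length + j < 9 := by omega
      simp [h1, h9] at key
      simp [key]
    have := Finset.card_le_card hsub
    omega
  · intro w hw
    obtain ⟨T, hT, hTw⟩ := exists_nine (w.take 9) (by simp [hw])
    have hsub : (T : Set (List (Fin 2))) ⊆ PalFac w := by
      intro y hy
      obtain ⟨⟨u, v, huv⟩, hp⟩ := hTw y hy
      refine ⟨⟨u, v ++ w.drop 9, ?_⟩, hp⟩
      rw [← List.append_assoc, ← huv, List.take_append_drop]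
    have := Set.ncard_le_ncard hsub (palFac_finite w)
    rw [Set.ncard_coe_finset] at this
    omega
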